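/- Let α, β ≥ 0 with α + β = 1 and let g : (0,∞)ⁿ → (0,∞)ⁿ be defined by g_i(x) = (Σ_j A_{ji} x_j)^α / (Σ_k A_{ik} x_k^{−1})^β. If A is irreducible (for all i, j there exists k ≥ 1 with (A^k)_{ij} > 0) and αA + βAᵀ is primitive (some power of αA + βAᵀ has all entries positive), then for any norm ‖·‖ on ℝⁿ and any initial point d⁰ with all entries positive, the sequence d^{k+1} = g(d^k)/‖g(d^k)‖ converges to a vector d* with all entries positive satisfying g(d*) = ‖g(d*)‖·d*, and the convergence is linear: limsup_{k→∞} ‖d^k − d*‖^{1/k} < 1. -/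

import Mathlib

open BigOperators Filter Matrix

/-- The deformed HOTS map `g_i(x) = (Σ_j A_{ji} x_j)^α / (Σ_k A_{ik} x_k⁻¹)^β`. -/
noncomputable def deformedHots {n : ℕ} (A : Matrix (Fin n) (Fin n) ℝ) (α β : ℝ)
    (x : Fin n → ℝ) : Fin n → ℝ :=
  fun i => (∑ j, A j i * x j) ^ α / (∑ k, A i k * (x k)⁻¹) ^ β

/-!
In the coordinates `u = log x` the map `g` becomes a topical map `G`: it is order preserving and, as
`α + β = 1`, commutes with adding a constant to all coordinates. Hence `G` does not expand the sup
norm and the increments of an orbit of `G` stay bounded. Irreducibility of `A` makes the oscillation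
of `u` bounded in terms of `G u - u`, so the whole orbit has bounded oscillation. On vectors of
bounded oscillation every derivative of `G` dominates a positive multiple of `(αA + βAᵀ)ᵀ`;
primitivity then makes the spread of the coordinates of the increments decay geometrically, and the
increments converge to a vector with all coordinates equal. The orbit therefore converges, up to a
linear drift, at a geometric rate. The drift disappears under normalization, and normalization is
locally Lipschitz, so the rate carries over to the normalized iteration.
-/

open Asymptotics

section GeometricDecay

lemma exists_le_mul_pow_of_antitone {D : ℕ → ℝ} (hD0 : ∀ k, 0 ≤ D k) (hanti : Antitone D)
    {p : ℕ} (hp : p ≠ 0) {q : ℝ} (hq : q < 1) (hD : ∀ k, D (k + p) ≤ q * D k) :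
    ∃ C : ℝ, ∃ r ∈ Set.Ioo (0 : ℝ) 1, ∀ k, D k ≤ C * r ^ k := by
  obtain ⟨s, hqs, hs1⟩ := exists_between (max_lt hq one_pos)
  have hs0 : 0 < s := (le_max_right q 0).trans_lt hqs
  set r : ℝ := s ^ (p⁻¹ : ℝ)
  have hr0 : 0 < r := Real.rpow_pos_of_pos hs0 _
  have hr1 : r < 1 := Real.rpow_lt_one hs0.le hs1 (by positivity)
  have hrp : r ^ p = s := Real.rpow_inv_natCast_pow hs0.le hp
  refine ⟨D 0 / s, r, ⟨hr0, hr1⟩, fun k => ?_⟩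
  induction k using Nat.strong_induction_on with
  | _ k ih =>
    rcases lt_or_ge k p with hk | hk
    · have hsr : s ≤ r ^ k := hrp ▸ pow_le_pow_of_le_one hr0.le hr1.le hk.le
      rw [div_mul_eq_mul_div, le_div_iff₀ hs0]
      exact mul_le_mul (hanti k.zero_le) hsr hs0.le (hD0 0)
    · obtain ⟨l, rfl⟩ := Nat.exists_eq_add_of_le' hk
      calc D (l + p) ≤ q * D l := hD l
        _ ≤ s * D l := mul_le_mul_of_nonneg_right ((le_max_left q 0).trans hqs.le) (hD0 l)
        _ ≤ s * (D 0 / s * r ^ l) := mul_le_mul_of_nonneg_left (ih l (by lia)) hs0.le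
        _ = D 0 / s * r ^ (l + p) := by rw [pow_add, hrp]; ring

-- The intervals `[min w k, max w k]` are nested and shrink by the factor `1 - ε` every `p` steps.
lemma exists_abs_sub_le_mul_pow_of_contracting {ι : Type*} [Finite ι] [Nonempty ι]
    {w : ℕ → ι → ℝ}
    (hIcc : ∀ k a b, (∀ i, w k i ∈ Set.Icc a b) → ∀ i, w (k + 1) i ∈ Set.Icc a b)
    {p : ℕ} (hp : p ≠ 0) {ε : ℝ} (hε : 0 < ε)
    (hcontr : ∀ k m, (∀ i, m ≤ w k i) → ∀ i j, ε * (w k j - m) ≤ w (k + p) i - m) :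
    ∃ l C : ℝ, ∃ r ∈ Set.Ioo (0 : ℝ) 1, ∀ k i, |w k i - l| ≤ C * r ^ k := by
  set a : ℕ → ℝ := fun k => ⨅ i, w k i
  set b : ℕ → ℝ := fun k => ⨆ i, w k i
  have ha : ∀ k i, a k ≤ w k i := fun k => ciInf_le (Set.finite_range _).bddBelow
  have hb : ∀ k i, w k i ≤ b k := fun k => le_ciSup (Set.finite_range _).bddAbove
  have hab : ∀ k, a k ≤ b k := fun k => (ha k (Classical.arbitrary ι)).trans (hb k _)
  have hstep : ∀ k i, w (k + 1) i ∈ Set.Icc (a k) (b k) :=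
    fun k => hIcc k _ _ fun i => ⟨ha k i, hb k i⟩
  have ha_mono : Monotone a := monotone_nat_of_le_succ fun k => le_ciInf fun i => (hstep k i).1
  have hb_anti : Antitone b := antitone_nat_of_succ_le fun k => ciSup_le fun i => (hstep k i).2
  have hshrink : ∀ k, b (k + p) - a (k + p) ≤ (1 - ε) * (b k - a k) := fun k => by
    obtain ⟨j, hj⟩ : ∃ j, w k j = b k := exists_eq_ciSup_of_finite
    have hlow : a k + ε * (b k - a k) ≤ a (k + p) := le_ciInf fun i => by
      linarith [hj ▸ hcontr k (a k) (ha k) i j]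
    linarith [hb_anti (Nat.le_add_right k p)]
  obtain ⟨C, r, hr, hC⟩ := exists_le_mul_pow_of_antitone (fun k => sub_nonneg.2 (hab k))
    (fun _ _ h => sub_le_sub (hb_anti h) (ha_mono h)) hp (by linarith : 1 - ε < 1) hshrink
  have hl := Set.mem_iInter.1 (ha_mono.ciSup_mem_iInter_Icc_of_antitone hb_anti hab)
  exact ⟨⨆ k, a k, C, r, hr, fun k i =>
    (abs_sub_le_of_le_of_le (ha k i) (hb k i) (hl k).1 (hl k).2).trans (hC k)⟩

lemma limsup_rpow_inv_lt_one_of_isBigO {a : ℕ → ℝ} (ha : ∀ k, 0 ≤ a k) {r : ℝ}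
    (hr : r ∈ Set.Ioo (0 : ℝ) 1) (h : a =O[atTop] fun k => r ^ k) :
    limsup (fun k : ℕ => a k ^ (1 / (k : ℝ))) atTop < 1 := by
  obtain ⟨s, hrs, hs1⟩ := exists_between hr.2
  have hs0 : 0 < s := hr.1.trans hrs
  have hlittle := h.trans_isLittleO (isLittleO_pow_pow_of_lt_left hr.1.le hrs)
  refine (limsup_le_of_le ?_ ?_).trans_lt hs1
  · exact isCoboundedUnder_le_of_le atTop (x := 0) fun k => Real.rpow_nonneg (ha k) _
  · filter_upwards [hlittle.bound one_pos, eventually_ne_atTop 0] with k hk hk0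
    have hak : a k ≤ s ^ k := by
      simpa only [Real.norm_of_nonneg (ha k), Real.norm_of_nonneg (pow_nonneg hs0.le k), one_mul]
        using hk
    calc a k ^ (1 / (k : ℝ)) ≤ (s ^ k) ^ (1 / (k : ℝ)) :=
          Real.rpow_le_rpow (ha k) hak (by positivity)
      _ = s := by rw [one_div, Real.pow_rpow_inv_natCast hs0.le hk0]

end GeometricDecay

section Normalization

variable {E : Type*} [AddCommGroup E] [Module ℝ E]

/-- The radial projection `x ↦ x / p x` onto the unit sphere of the seminorm `p`, sending `x` to `0`
where `p x = 0`. -/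
noncomputable def normalizeBy (p : Seminorm ℝ E) (x : E) : E := (p x)⁻¹ • x

variable {p : Seminorm ℝ E} {g : E → E}

lemma normalizeBy_smul_of_pos {c : ℝ} (hc : 0 < c) (x : E) :
    normalizeBy p (c • x) = normalizeBy p x := by
  rw [normalizeBy, normalizeBy, map_smul_eq_mul, Real.norm_of_nonneg hc.le, smul_smul,
    _root_.mul_inv_rev, inv_mul_cancel_right₀ hc.ne']

lemma map_normalizeBy_self {x : E} (hx : p x ≠ 0) : p (normalizeBy p x) = 1 := by
  rw [normalizeBy, map_smul_eq_mul, norm_inv, Real.norm_of_nonneg (apply_nonneg p x),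
    inv_mul_cancel₀ hx]

lemma map_normalizeBy_eq_smul {x : E} {c : ℝ} (hx : p x ≠ 0) (hc : 0 ≤ c) (hgx : g x = c • x)
    (hg : g (normalizeBy p x) = (p x)⁻¹ • g x) :
    g (normalizeBy p x) = p (g (normalizeBy p x)) • normalizeBy p x := by
  have heig : g (normalizeBy p x) = c • normalizeBy p x := by
    rw [hg, hgx, normalizeBy, smul_comm]
  rw [heig, map_smul_eq_mul, map_normalizeBy_self hx, mul_one, Real.norm_of_nonneg hc]

-- Normalizing at each step or only at the end gives the same point, as `g` is homogeneous.
lemma normalizeBy_orbit_eq {s : Set E} (hs : Set.MapsTo g s s)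
    (hg : ∀ x ∈ s, ∀ c : ℝ, 0 < c → g (c • x) = c • g x) (hp : ∀ x ∈ s, p x ≠ 0)
    {d : ℕ → E} (hd0 : d 0 ∈ s) (hiter : ∀ k, d (k + 1) = normalizeBy p (g (d k))) (k : ℕ) :
    d (k + 1) = normalizeBy p (g^[k + 1] (d 0)) := by
  induction k with
  | zero => exact hiter 0
  | succ k ih =>
    have hmem : g^[k + 1] (d 0) ∈ s := hs.iterate (k + 1) hd0
    have hpos : 0 < (p (g^[k + 1] (d 0)))⁻¹ :=
      inv_pos.2 ((apply_nonneg p _).lt_of_ne' (hp _ hmem))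
    calc d (k + 2) = normalizeBy p (g ((p (g^[k + 1] (d 0)))⁻¹ • g^[k + 1] (d 0))) := by
          rw [hiter, ih]; rfl
      _ = normalizeBy p (g^[k + 2] (d 0)) := by
          rw [hg _ hmem _ hpos, normalizeBy_smul_of_pos hpos, ← Function.iterate_succ_apply' g]

lemma map_normalizeBy_sub_le {x y : E} (hx : p x ≠ 0) (hy : p y ≠ 0) :
    p (normalizeBy p x - normalizeBy p y) ≤ 2 / p y * p (x - y) := by
  have hx0 : 0 < p x := (apply_nonneg p x).lt_of_ne' hx
  have hy0 : 0 < p y := (apply_nonneg p y).lt_of_ne' hy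
  have hsplit : normalizeBy p x - normalizeBy p y
      = (p y)⁻¹ • (x - y) + ((p x)⁻¹ - (p y)⁻¹) • x := by
    simp only [normalizeBy]; module
  have hinv : ‖(p x)⁻¹ - (p y)⁻¹‖ * p x = ‖p x - p y‖ / p y := by
    rw [inv_sub_inv hx hy, norm_div, norm_mul, Real.norm_of_nonneg hx0.le,
      Real.norm_of_nonneg hy0.le, norm_sub_rev]
    field_simp
  calc p (normalizeBy p x - normalizeBy p y)
      ≤ (p y)⁻¹ * p (x - y) + ‖p x - p y‖ / p y := by
        rw [hsplit, ← hinv]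
        refine (map_add_le_add p _ _).trans_eq ?_
        rw [map_smul_eq_mul, map_smul_eq_mul, norm_inv, Real.norm_of_nonneg hy0.le]
    _ ≤ (p y)⁻¹ * p (x - y) + p (x - y) / p y := by
        gcongr; exact p.norm_sub_map_le_sub x y
    _ = 2 / p y * p (x - y) := by ring

end Normalization

section NormalizationLimit

variable {E : Type*} [NormedAddCommGroup E] [NormedSpace ℝ E] [FiniteDimensional ℝ E]
  {p : Seminorm ℝ E}

lemma continuous_seminorm_of_finiteDimensional (p : Seminorm ℝ E) : Continuous p :=
  p.convexOn.locallyLipschitz.continuous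

lemma continuousAt_normalizeBy {x : E} (hx : p x ≠ 0) : ContinuousAt (normalizeBy p) x :=
  ((continuous_seminorm_of_finiteDimensional p).continuousAt.inv₀ hx).smul continuousAt_id

lemma isBigO_map_normalizeBy_sub {x : E} (hx : p x ≠ 0) :
    (fun z => p (normalizeBy p z - normalizeBy p x)) =O[nhds x] fun z => z - x := by
  have hcont := continuous_seminorm_of_finiteDimensional p
  obtain ⟨K, -, hK⟩ := Seminorm.bound_of_continuous_normedSpace p hcont
  refine IsBigO.of_bound (2 / p x * K) ?_
  filter_upwards [hcont.continuousAt.eventually_ne hx] with z hz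
  rw [Real.norm_of_nonneg (apply_nonneg p _), mul_assoc]
  exact (map_normalizeBy_sub_le hz hx).trans
    (mul_le_mul_of_nonneg_left (hK _) (div_nonneg zero_le_two (apply_nonneg p x)))

end NormalizationLimit

section Topical

variable {ι : Type*}

/-- Topical maps of `ℝ^ι`: order-preserving maps that commute with adding the same constant to every
coordinate. They are the order-preserving homogeneous maps of the positive orthant read in
logarithmic coordinates. -/
structure IsTopical (F : (ι → ℝ) → ι → ℝ) : Prop where
  mono : Monotone F
  map_add_const : ∀ u (c : ℝ), F (fun i => u i + c) = fun i => F u i + c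

namespace IsTopical

variable {F : (ι → ℝ) → ι → ℝ} {u v : ι → ℝ} {m : ℝ}

lemma le_sub (hF : IsTopical F) (h : ∀ j, m ≤ u j - v j) (i : ι) : m ≤ F u i - F v i := by
  have hle : F (fun j => v j + m) i ≤ F u i := hF.mono (fun j => by linarith [h j]) i
  rw [hF.map_add_const] at hle
  linarith

lemma sub_le (hF : IsTopical F) (h : ∀ j, u j - v j ≤ m) (i : ι) : F u i - F v i ≤ m := by
  linarith [hF.le_sub (u := v) (v := u) (m := -m) (fun j => by linarith [h j]) i]

variable [Fintype ι]

lemma lipschitzWith_one (hF : IsTopical F) : LipschitzWith 1 F := by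
  refine LipschitzWith.of_dist_le_mul fun u v => ?_
  rw [NNReal.coe_one, one_mul, dist_pi_le_iff dist_nonneg]
  have hcoord : ∀ j, |u j - v j| ≤ dist u v := fun j => dist_le_pi_dist u v j
  exact fun i => abs_le.2
    ⟨hF.le_sub (fun j => (abs_le.1 (hcoord j)).1) i, hF.sub_le (fun j => (abs_le.1 (hcoord j)).2) i⟩

-- The increments of the orbit converge geometrically to a common value `l`, so the orbit in the
-- frame moving at speed `l` is a Cauchy sequence; its limit is the additive eigenvector `y`.
theorem exists_eigenvector_isBigO_iterate_sub [Nonempty ι] (hF : IsTopical F) (u₀ : ι → ℝ)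
    {p : ℕ} (hp : p ≠ 0) {ε : ℝ} (hε : 0 < ε)
    (hcontr : ∀ k m, (∀ i, m ≤ F^[k + 1] u₀ i - F^[k] u₀ i) → ∀ i j,
      ε * (F^[k + 1] u₀ j - F^[k] u₀ j - m) ≤ F^[k + p + 1] u₀ i - F^[k + p] u₀ i - m) :
    ∃ (l : ℝ) (y : ι → ℝ), (F y = fun i => y i + l) ∧ ∃ r ∈ Set.Ioo (0 : ℝ) 1,
      (fun k : ℕ => (fun i => F^[k] u₀ i + -(k * l)) - y) =O[atTop] fun k => r ^ k := by
  obtain ⟨l, C, r, hr, hincr⟩ := exists_abs_sub_le_mul_pow_of_contracting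
    (w := fun k i => F^[k + 1] u₀ i - F^[k] u₀ i) (fun k a b h i => by
      simp only [Function.iterate_succ_apply'] at h ⊢
      exact ⟨hF.le_sub (fun j => (h j).1) i, hF.sub_le (fun j => (h j).2) i⟩) hp hε hcontr
  set Y : ℕ → ι → ℝ := fun k i => F^[k] u₀ i + -(k * l) with hY
  have hdist : ∀ k, dist (Y k) (Y (k + 1)) ≤ C * r ^ k := fun k => by
    refine (dist_pi_le_iff ((abs_nonneg _).trans (hincr k (Classical.arbitrary ι)))).2 fun i => ?_
    rw [dist_comm, Real.dist_eq]
    refine (congrArg abs ?_).trans_le (hincr k i)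
    simp only [hY]; push_cast; ring
  obtain ⟨y, hy⟩ := cauchySeq_tendsto_of_complete (cauchySeq_of_le_geometric r C hr.2 hdist)
  have hFY : ∀ k, F (Y k) = fun i => Y (k + 1) i + l := fun k => by
    simp only [hY, hF.map_add_const, Function.iterate_succ_apply']
    funext i; push_cast; ring
  refine ⟨l, y, tendsto_nhds_unique ((hF.lipschitzWith_one.continuous.tendsto y).comp hy) ?_,
    r, hr, IsBigO.of_bound (C / (1 - r)) (Eventually.of_forall fun k => ?_)⟩
  · simp only [Function.comp_def, hFY]
    exact ((continuous_pi fun i => (continuous_apply i).add_const l).tendsto y).comp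
      (hy.comp (tendsto_add_atTop_nat 1))
  · rw [← dist_eq_norm, Real.norm_of_nonneg (pow_nonneg hr.1.le k), div_mul_eq_mul_div]
    exact dist_le_of_le_geometric_of_tendsto r C hr.2 hdist hy k

lemma norm_iterate_succ_sub_le (hF : IsTopical F) (u : ι → ℝ) (k : ℕ) :
    ‖F^[k + 1] u - F^[k] u‖ ≤ ‖F u - u‖ := by
  simpa only [NNReal.coe_one, one_pow, mul_one, dist_eq_norm, norm_sub_rev]
    using hF.lipschitzWith_one.dist_iterate_succ_le_geometric u k

end IsTopical

end Topical

section LogSumExp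

variable {ι : Type*} [Fintype ι]

/-- The weighted log-sum-exp function: the linear form with coefficients `a`, read in logarithmic
coordinates. -/
noncomputable def logSumExp (a u : ι → ℝ) : ℝ := Real.log (∑ j, a j * Real.exp (u j))

/-- The weighted softmax, that is the gradient of `logSumExp a`. -/
noncomputable def softmax (a u : ι → ℝ) (j : ι) : ℝ :=
  a j * Real.exp (u j) / ∑ i, a i * Real.exp (u i)

variable {a u v : ι → ℝ}

lemma sum_mul_exp_pos (ha : 0 < a) (u : ι → ℝ) : 0 < ∑ j, a j * Real.exp (u j) := by
  obtain ⟨ha0, j, hj⟩ := Pi.lt_def.1 ha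
  exact Finset.sum_pos' (fun i _ => mul_nonneg (ha0 i) (Real.exp_pos _).le)
    ⟨j, Finset.mem_univ j, mul_pos hj (Real.exp_pos _)⟩

lemma logSumExp_add_const (ha : 0 < a) (u : ι → ℝ) (c : ℝ) :
    logSumExp a (fun j => u j + c) = logSumExp a u + c := by
  simp only [logSumExp, Real.exp_add, ← mul_assoc, ← Finset.sum_mul]
  rw [Real.log_mul (sum_mul_exp_pos ha u).ne' (Real.exp_pos c).ne', Real.log_exp]

lemma monotone_logSumExp (ha : 0 < a) : Monotone (logSumExp a) := fun u _ huv =>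
  Real.log_le_log (sum_mul_exp_pos ha u) (Finset.sum_le_sum fun j _ =>
    mul_le_mul_of_nonneg_left (Real.exp_le_exp.2 (huv j)) (ha.le j))

lemma logSumExp_le (ha : 0 < a) {M : ℝ} (h : ∀ j, u j ≤ M) :
    logSumExp a u ≤ logSumExp a 0 + M := by
  rw [← logSumExp_add_const ha]
  exact monotone_logSumExp ha fun j => by simpa using h j

lemma log_add_le_logSumExp (ha : 0 ≤ a) (u : ι → ℝ) {j : ι} (hj : 0 < a j) :
    Real.log (a j) + u j ≤ logSumExp a u := by
  rw [← Real.log_exp (u j), ← Real.log_mul hj.ne' (Real.exp_pos _).ne']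
  exact Real.log_le_log (mul_pos hj (Real.exp_pos _)) (Finset.single_le_sum
    (f := fun j => a j * Real.exp (u j)) (fun i _ => mul_nonneg (ha i) (Real.exp_pos _).le)
    (Finset.mem_univ j))

lemma softmax_nonneg (ha : 0 ≤ a) (u : ι → ℝ) (j : ι) : 0 ≤ softmax a u j :=
  div_nonneg (mul_nonneg (ha j) (Real.exp_pos _).le)
    (Finset.sum_nonneg fun i _ => mul_nonneg (ha i) (Real.exp_pos _).le)

lemma sum_softmax (ha : 0 < a) (u : ι → ℝ) : ∑ j, softmax a u j = 1 := by
  simp only [softmax, ← Finset.sum_div]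
  exact div_self (sum_mul_exp_pos ha u).ne'

lemma mul_le_softmax (ha : 0 < a) {R δ : ℝ} (hR : ∀ i j, u i - u j ≤ R)
    (hδ : δ * ∑ i, a i ≤ Real.exp (-R)) (j : ι) : δ * a j ≤ softmax a u j := by
  have hsum : δ * ∑ i, a i * Real.exp (u i) ≤ Real.exp (u j) := by
    rcases le_or_gt δ 0 with hδ0 | hδ0
    · exact (mul_nonpos_of_nonpos_of_nonneg hδ0 (sum_mul_exp_pos ha u).le).trans (Real.exp_pos _).le
    calc δ * ∑ i, a i * Real.exp (u i) ≤ δ * ∑ i, a i * Real.exp (u j + R) := by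
          gcongr with i
          · exact ha.le i
          · linarith [hR i j]
      _ = δ * (∑ i, a i) * Real.exp (u j + R) := by rw [← Finset.sum_mul, mul_assoc]
      _ ≤ Real.exp (-R) * Real.exp (u j + R) := by gcongr
      _ = Real.exp (u j) := by rw [← Real.exp_add]; ring_nf
  rw [softmax, le_div_iff₀ (sum_mul_exp_pos ha u)]
  linarith [mul_le_mul_of_nonneg_left hsum (ha.le j)]

-- Jensen's inequality for `exp`, with the weights `softmax a v`.
lemma sum_softmax_mul_sub_le (ha : 0 < a) (u v : ι → ℝ) :
    ∑ j, softmax a v j * (u j - v j) ≤ logSumExp a u - logSumExp a v := by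
  have hv := sum_mul_exp_pos ha v
  have hjensen : Real.exp (∑ j, softmax a v j * (u j - v j))
      ≤ ∑ j, softmax a v j * Real.exp (u j - v j) :=
    convexOn_exp.map_sum_le (fun j _ => softmax_nonneg ha.le v j) (sum_softmax ha v)
      fun _ _ => Set.mem_univ _
  have hratio : ∑ j, softmax a v j * Real.exp (u j - v j)
      = (∑ j, a j * Real.exp (u j)) / ∑ j, a j * Real.exp (v j) := by
    rw [Finset.sum_div]
    refine Finset.sum_congr rfl fun j _ => ?_
    rw [softmax, div_mul_eq_mul_div, mul_assoc, ← Real.exp_add, add_sub_cancel]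
  rw [logSumExp, logSumExp, ← Real.log_div (sum_mul_exp_pos ha u).ne' hv.ne',
    Real.le_log_iff_exp_le (div_pos (sum_mul_exp_pos ha u) hv), ← hratio]
  exact hjensen

lemma mul_sum_le_logSumExp_sub (ha : 0 < a) {R δ m : ℝ} (hR : ∀ i j, v i - v j ≤ R)
    (hδ : δ * ∑ i, a i ≤ Real.exp (-R)) (hm : ∀ j, m ≤ u j - v j) :
    δ * ∑ j, a j * (u j - v j - m) ≤ logSumExp a u - logSumExp a v - m := by
  calc δ * ∑ j, a j * (u j - v j - m) = ∑ j, δ * a j * (u j - v j - m) := by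
        rw [Finset.mul_sum]; exact Finset.sum_congr rfl fun j _ => (mul_assoc _ _ _).symm
    _ ≤ ∑ j, softmax a v j * (u j - v j - m) := Finset.sum_le_sum fun j _ =>
        mul_le_mul_of_nonneg_right (mul_le_softmax ha hR hδ j) (sub_nonneg.2 (hm j))
    _ = ∑ j, softmax a v j * (u j - v j) - m := by
        simp only [mul_sub _ _ m, Finset.sum_sub_distrib, ← Finset.sum_mul, sum_softmax ha, one_mul]
    _ ≤ logSumExp a u - logSumExp a v - m := by gcongr; exact sum_softmax_mul_sub_le ha u v

end LogSumExp

section NonnegativeMatrices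

variable {ι : Type*}

lemma col_pos_of_isIrreducible {A : Matrix ι ι ℝ} (hA : A.IsIrreducible) (j : ι) : 0 < Aᵀ j := by
  let := A.toQuiver
  obtain ⟨path, hlength⟩ := hA.connected j j
  cases path with
  | nil => exact absurd hlength (lt_irrefl 0)
  | cons _ e => exact Pi.lt_def.2 ⟨fun i => hA.nonneg i j, _, e.down⟩

lemma row_pos_of_isIrreducible {A : Matrix ι ι ℝ} (hA : A.IsIrreducible) (i : ι) : 0 < A i :=
  col_pos_of_isIrreducible hA.transpose i

lemma exists_le_of_path [Quiver ι] {α : ℝ} (hα : 0 < α) (K : ι → ι → ℝ) {i j : ι}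
    (path : Quiver.Path i j) (M : ℝ) :
    ∃ R, ∀ t : ι → ℝ, (∀ a b, (a ⟶ b) → α * t a ≤ t b + K a b) → t j ≤ M → t i ≤ R := by
  induction path generalizing M with
  | nil => exact ⟨M, fun _ _ ht => ht⟩
  | @cons a b _ e ih =>
    obtain ⟨R, hR⟩ := ih ((M + K a b) / α)
    exact ⟨R, fun t hedge ht => hR t hedge ((le_div_iff₀' hα).2 (by linarith [hedge a b e]))⟩

variable [Fintype ι]

lemma pow_mulVec_le_of_mulVec_le [DecidableEq ι] {B : Matrix ι ι ℝ} (hB : ∀ i j, 0 ≤ B i j)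
    {x : ℕ → ι → ℝ} (hx : ∀ s, B *ᵥ x s ≤ x (s + 1)) (s : ℕ) : (B ^ s) *ᵥ x 0 ≤ x s := by
  induction s with
  | zero => rw [pow_zero, one_mulVec]
  | succ s ih =>
    rw [pow_succ', ← mulVec_mulVec]
    exact le_trans (fun i => dotProduct_le_dotProduct_of_nonneg_left ih (hB i)) (hx s)

lemma exists_pos_mul_le_mulVec {B : Matrix ι ι ℝ} (hB : ∀ i j, 0 < B i j) :
    ∃ ε > 0, ∀ x : ι → ℝ, 0 ≤ x → ∀ i j, ε * x j ≤ (B *ᵥ x) i := by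
  have hev : ∀ᶠ ε in nhdsWithin (0 : ℝ) (Set.Ioi 0), ∀ i j, ε < B i j :=
    eventually_all.2 fun i => eventually_all.2 fun j =>
      (eventually_lt_nhds (hB i j)).filter_mono nhdsWithin_le_nhds
  obtain ⟨ε, hε, hε0⟩ := (hev.and self_mem_nhdsWithin).exists
  refine ⟨ε, hε0, fun x hx i j => ?_⟩
  exact (mul_le_mul_of_nonneg_right (hε i j).le (hx j)).trans (Finset.single_le_sum
    (f := fun j => B i j * x j) (fun l _ => mul_nonneg (hB i l).le (hx l)) (Finset.mem_univ j))

lemma exists_pos_mul_sum_le {κ : Type*} [Finite κ] (S : κ → ℝ) {b : ℝ} (hb : 0 < b) :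
    ∃ δ > 0, ∀ i, δ * S i ≤ b := by
  have hev : ∀ᶠ δ in nhdsWithin (0 : ℝ) (Set.Ioi 0), ∀ i, δ * S i < b :=
    eventually_all.2 fun i => (((continuous_mul_const (S i)).tendsto' 0 0
      (zero_mul _)).eventually_lt_const hb).filter_mono nhdsWithin_le_nhds
  obtain ⟨δ, hδ, hδ0⟩ := (hev.and self_mem_nhdsWithin).exists
  exact ⟨δ, hδ0, fun i => (hδ i).le⟩

end NonnegativeMatrices

section LogHots

variable {ι : Type*} [Fintype ι] {A : Matrix ι ι ℝ} {α β : ℝ}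

/-- The deformed HOTS map in the logarithmic coordinates `u = log x`. -/
noncomputable def logHots (A : Matrix ι ι ℝ) (α β : ℝ) (u : ι → ℝ) : ι → ℝ :=
  fun i => α * logSumExp (Aᵀ i) u - β * logSumExp (A i) (-u)

lemma logHots_transpose_neg (A : Matrix ι ι ℝ) (α β : ℝ) (u : ι → ℝ) :
    logHots Aᵀ β α (-u) = -logHots A α β u := by
  funext i
  simp only [logHots, transpose_transpose, neg_neg, Pi.neg_apply, neg_sub]

lemma isTopical_logHots (hrow : ∀ i, 0 < A i) (hcol : ∀ j, 0 < Aᵀ j) (hα : 0 ≤ α) (hβ : 0 ≤ β)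
    (hαβ : α + β = 1) : IsTopical (logHots A α β) where
  mono u v huv i := sub_le_sub
    (mul_le_mul_of_nonneg_left (monotone_logSumExp (hcol i) huv) hα)
    (mul_le_mul_of_nonneg_left (monotone_logSumExp (hrow i) (neg_le_neg huv)) hβ)
  map_add_const u c := by
    funext i
    have hneg : (-fun j => u j + c) = fun j => (-u) j + -c := funext fun j => neg_add _ _
    simp only [logHots, hneg, logSumExp_add_const (hcol i), logSumExp_add_const (hrow i)]
    linear_combination c * hαβ

lemma mul_sub_le_of_logHots_le (hrow : ∀ i, 0 < A i) (hcol : ∀ j, 0 < Aᵀ j) (hα : 0 ≤ α)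
    (hβ : 0 ≤ β) (hαβ : α + β = 1) {u : ι → ℝ} {c m : ℝ} {i j : ι} (hji : 0 < A j i)
    (hu : logHots A α β u i ≤ u i + c) (hm : ∀ l, m ≤ u l) :
    α * (u j - m) ≤ u i - m + (c - α * Real.log (A j i) + β * logSumExp (A i) 0) := by
  have hlower := mul_le_mul_of_nonneg_left (log_add_le_logSumExp (hcol i).le u hji) hα
  have hupper := mul_le_mul_of_nonneg_left
    (logSumExp_le (hrow i) (u := -u) fun l => neg_le_neg (hm l)) hβ
  simp only [logHots, transpose_apply] at hu hlower
  linear_combination hu + hlower + hupper - m * hαβ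

-- Along an edge of the graph of `A`, `hu` bounds the coordinate at its tail by the one at its head;
-- irreducibility joins every vertex to one where `u` is minimal.
lemma exists_sub_le_of_logHots_le (hA : A.IsIrreducible) (hα : 0 < α) (hβ : 0 ≤ β)
    (hαβ : α + β = 1) (c : ℝ) :
    ∃ R, ∀ u, (∀ i, logHots A α β u i ≤ u i + c) → ∀ i j, u i - u j ≤ R := by
  let := A.toQuiver
  choose path _ using hA.connected
  choose R hR using fun i j => exists_le_of_path hα
    (fun a b => c - α * Real.log (A a b) + β * logSumExp (A b) 0) (path i j) 0
  obtain ⟨R', hR'⟩ := (Set.finite_range (Function.uncurry R)).bddAbove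
  refine ⟨R', fun u hu i j => ?_⟩
  have : Nonempty ι := ⟨i⟩
  obtain ⟨i₀, hi₀⟩ := Finite.exists_min u
  have hpath : u i - u i₀ ≤ R i i₀ := hR i i₀ (fun l => u l - u i₀)
    (fun a b e => mul_sub_le_of_logHots_le (row_pos_of_isIrreducible hA)
      (col_pos_of_isIrreducible hA) hα.le hβ hαβ e.down (hu b) hi₀) (sub_self _).le
  linarith [hi₀ j, hR' ⟨(i, i₀), rfl⟩, show Function.uncurry R (i, i₀) = R i i₀ from rfl]

lemma exists_sub_le_of_norm_logHots_sub_le (hA : A.IsIrreducible) (hα : 0 ≤ α) (hβ : 0 ≤ β)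
    (hαβ : α + β = 1) (c : ℝ) :
    ∃ R, ∀ u, ‖logHots A α β u - u‖ ≤ c → ∀ i j, u i - u j ≤ R := by
  have hcoord : ∀ u, ‖logHots A α β u - u‖ ≤ c → ∀ i, |logHots A α β u i - u i| ≤ c :=
    fun u hu i => (norm_le_pi_norm (logHots A α β u - u) i).trans hu
  rcases hα.lt_or_eq with hα0 | rfl
  · obtain ⟨R, hR⟩ := exists_sub_le_of_logHots_le hA hα0 hβ hαβ c
    exact ⟨R, fun u hu => hR u fun i => by linarith [(abs_le.1 (hcoord u hu i)).2]⟩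
  · obtain ⟨R, hR⟩ := exists_sub_le_of_logHots_le hA.transpose (by linarith : 0 < β) le_rfl
      (by linarith) c
    refine ⟨R, fun u hu i j => ?_⟩
    have hneg := hR (-u) (fun i => by
      rw [logHots_transpose_neg, Pi.neg_apply, Pi.neg_apply]
      linarith [(abs_le.1 (hcoord u hu i)).1]) j i
    simpa only [Pi.neg_apply, neg_sub_neg] using hneg

lemma mulVec_le_logHots_sub (hrow : ∀ i, 0 < A i) (hcol : ∀ j, 0 < Aᵀ j) (hα : 0 ≤ α)
    (hβ : 0 ≤ β) (hαβ : α + β = 1) {δ R : ℝ} (hδrow : ∀ i, δ * ∑ j, A i j ≤ Real.exp (-R))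
    (hδcol : ∀ i, δ * ∑ j, Aᵀ i j ≤ Real.exp (-R)) {u v : ι → ℝ} {m : ℝ}
    (hu : ∀ i j, u i - u j ≤ R) (hv : ∀ i j, v i - v j ≤ R) (hm : ∀ j, m ≤ u j - v j) :
    (δ • (α • A + β • Aᵀ)ᵀ) *ᵥ (fun j => u j - v j - m)
      ≤ fun i => logHots A α β u i - logHots A α β v i - m := fun i => by
  have hcol_ge := mul_le_mul_of_nonneg_left
    (mul_sum_le_logSumExp_sub (hcol i) hv (hδcol i) hm) hα
  have hrow_ge := mul_le_mul_of_nonneg_left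
    (mul_sum_le_logSumExp_sub (u := -v) (v := -u) (m := m) (hrow i)
      (fun i j => by simpa only [Pi.neg_apply, neg_sub_neg] using hu j i) (hδrow i)
      (fun j => by simpa only [Pi.neg_apply, neg_sub_neg] using hm j)) hβ
  have hsplit : ((δ • (α • A + β • Aᵀ)ᵀ) *ᵥ (fun j => u j - v j - m)) i
      = α * (δ * ∑ j, Aᵀ i j * (u j - v j - m))
        + β * (δ * ∑ j, A i j * ((-v) j - (-u) j - m)) := by
    simp only [mulVec, dotProduct, Matrix.smul_apply, Matrix.add_apply, transpose_apply,
      smul_eq_mul, Finset.mul_sum, ← Finset.sum_add_distrib, Pi.neg_apply]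
    exact Finset.sum_congr rfl fun j _ => by ring
  rw [hsplit]
  simp only [logHots]
  linear_combination hcol_ge + hrow_ge - m * hαβ

-- `mulVec_le_logHots_sub` iterated `p` times, where the `p`-th power of `αA + βAᵀ` is positive.
lemma exists_contracting_of_sub_le [DecidableEq ι] (hrow : ∀ i, 0 < A i) (hcol : ∀ j, 0 < Aᵀ j)
    (hprim : (α • A + β • Aᵀ).IsPrimitive) (hα : 0 ≤ α) (hβ : 0 ≤ β) (hαβ : α + β = 1) (R : ℝ) :
    ∃ p ≠ 0, ∃ ε > 0, ∀ u : ℕ → ι → ℝ, (∀ k, u (k + 1) = logHots A α β (u k)) →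
      (∀ k i j, u k i - u k j ≤ R) → ∀ m, (∀ i, m ≤ u 1 i - u 0 i) → ∀ i j,
      ε * (u 1 j - u 0 j - m) ≤ u (p + 1) i - u p i - m := by
  obtain ⟨δ, hδ0, hδ⟩ := exists_pos_mul_sum_le
    (Sum.elim (fun i => ∑ j, A i j) fun i => ∑ j, Aᵀ i j) (Real.exp_pos (-R))
  obtain ⟨p, hp, hpos⟩ := hprim.exists_pos_pow
  set B := δ • (α • A + β • Aᵀ)ᵀ with hBdef
  have hB : ∀ i j, 0 ≤ B i j := fun i j => mul_nonneg hδ0.le (hprim.nonneg j i)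
  have hBp : ∀ i j, 0 < (B ^ p) i j := fun i j => by
    rw [hBdef, smul_pow, ← transpose_pow]
    exact mul_pos (pow_pos hδ0 p) (hpos j i)
  obtain ⟨ε, hε, hmin⟩ := exists_pos_mul_le_mulVec hBp
  refine ⟨p, hp.ne', ε, hε, fun u hu hR m hm i j => ?_⟩
  have hge : ∀ s i, m ≤ u (s + 1) i - u s i := fun s => by
    induction s with
    | zero => exact hm
    | succ s ih =>
      have := (isTopical_logHots hrow hcol hα hβ hαβ).le_sub ih
      rwa [← hu, ← hu] at this
  have hstep : ∀ s, B *ᵥ (fun i => u (s + 1) i - u s i - m)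
      ≤ fun i => u (s + 1 + 1) i - u (s + 1) i - m := fun s => by
    have := mulVec_le_logHots_sub hrow hcol hα hβ hαβ (fun i => hδ (.inl i))
      (fun i => hδ (.inr i)) (hR (s + 1)) (hR s) (hge s)
    rwa [← hu, ← hu] at this
  exact (hmin _ (fun l => sub_nonneg.2 (hm l)) i j).trans
    (pow_mulVec_le_of_mulVec_le hB (x := fun s i => u (s + 1) i - u s i - m) hstep p i)

theorem exists_eigenvector_isBigO_iterate_logHots_sub [Nonempty ι] [DecidableEq ι]
    (hA : A.IsIrreducible) (hprim : (α • A + β • Aᵀ).IsPrimitive) (hα : 0 ≤ α) (hβ : 0 ≤ β)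
    (hαβ : α + β = 1) (u₀ : ι → ℝ) :
    ∃ (l : ℝ) (y : ι → ℝ), (logHots A α β y = fun i => y i + l) ∧ ∃ r ∈ Set.Ioo (0 : ℝ) 1,
      (fun k : ℕ => (fun i => (logHots A α β)^[k] u₀ i + -(k * l)) - y)
        =O[atTop] fun k => r ^ k := by
  have hrow := row_pos_of_isIrreducible hA
  have hcol := col_pos_of_isIrreducible hA
  have htop := isTopical_logHots hrow hcol hα hβ hαβ
  obtain ⟨R, hR⟩ := exists_sub_le_of_norm_logHots_sub_le hA hα hβ hαβ ‖logHots A α β u₀ - u₀‖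
  have hosc : ∀ k i j, (logHots A α β)^[k] u₀ i - (logHots A α β)^[k] u₀ j ≤ R := fun k =>
    hR _ <| by
      rw [← Function.iterate_succ_apply' (logHots A α β)]
      exact htop.norm_iterate_succ_sub_le u₀ k
  obtain ⟨p, hp, ε, hε, hcontr⟩ := exists_contracting_of_sub_le hrow hcol hprim hα hβ hαβ R
  exact htop.exists_eigenvector_isBigO_iterate_sub u₀ hp hε fun k =>
    hcontr (fun s => (logHots A α β)^[k + s] u₀)
      (fun s => Function.iterate_succ_apply' _ (k + s) u₀) fun s => hosc (k + s)

end LogHots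

section DeformedHots

variable {n : ℕ} {A : Matrix (Fin n) (Fin n) ℝ} {α β : ℝ}

lemma semiconj_exp_logHots_deformedHots (hrow : ∀ i, 0 < A i) (hcol : ∀ j, 0 < Aᵀ j) (α β : ℝ) :
    Function.Semiconj (Real.exp ∘ ·) (logHots A α β) (deformedHots A α β) := fun u => by
  funext i
  have hnum : 0 < ∑ j, A j i * Real.exp (u j) := sum_mul_exp_pos (hcol i) u
  have hden : 0 < ∑ j, A i j * (Real.exp (u j))⁻¹ := by
    simpa only [Pi.neg_apply, Real.exp_neg] using sum_mul_exp_pos (hrow i) (-u)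
  simp only [deformedHots, logHots, logSumExp, Function.comp_apply, transpose_apply, Pi.neg_apply,
    Real.exp_neg, Real.exp_sub, Real.rpow_def_of_pos hnum, Real.rpow_def_of_pos hden, mul_comm]

lemma exp_comp_add_const {ι : Type*} (u : ι → ℝ) (c : ℝ) :
    Real.exp ∘ (fun i => u i + c) = Real.exp c • (Real.exp ∘ u) :=
  funext fun i => (Real.exp_add (u i) c).trans (mul_comm _ _)

lemma exp_comp_log_comp {ι : Type*} {x : ι → ℝ} (hx : ∀ i, 0 < x i) :
    Real.exp ∘ Real.log ∘ x = x :=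
  funext fun i => Real.exp_log (hx i)

lemma deformedHots_pos (hrow : ∀ i, 0 < A i) (hcol : ∀ j, 0 < Aᵀ j) (α β : ℝ) {x : Fin n → ℝ}
    (hx : ∀ i, 0 < x i) (i : Fin n) : 0 < deformedHots A α β x i := by
  rw [← exp_comp_log_comp hx, ← semiconj_exp_logHots_deformedHots hrow hcol]
  exact Real.exp_pos _

lemma deformedHots_smul (hA : ∀ i j, 0 ≤ A i j) (hαβ : α + β = 1) {x : Fin n → ℝ}
    (hx : ∀ i, 0 < x i) {c : ℝ} (hc : 0 < c) :
    deformedHots A α β (c • x) = c • deformedHots A α β x := by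
  funext i
  have hnum : 0 ≤ ∑ j, A j i * x j := Finset.sum_nonneg fun j _ => mul_nonneg (hA j i) (hx j).le
  have hden : 0 ≤ ∑ j, A i j * (x j)⁻¹ :=
    Finset.sum_nonneg fun j _ => mul_nonneg (hA i j) (inv_nonneg.2 (hx j).le)
  have hpow : c ^ α / (c⁻¹) ^ β = c := by
    rw [Real.inv_rpow hc.le, div_inv_eq_mul, ← Real.rpow_add hc, hαβ, Real.rpow_one]
  simp only [deformedHots, Pi.smul_apply, smul_eq_mul, _root_.mul_inv_rev, mul_left_comm _ c,
    ← mul_assoc (A i _), ← Finset.mul_sum, ← Finset.sum_mul]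
  rw [Real.mul_rpow hc.le hnum, Real.mul_rpow hden (inv_nonneg.2 hc.le), mul_comm (_ ^ β),
    mul_div_mul_comm, hpow]

lemma isBigO_map_normalizeBy_exp_sub {ι : Type*} [Fintype ι] {p : Seminorm ℝ (ι → ℝ)}
    {u : ℕ → ι → ℝ} {y : ι → ℝ} (hp : p (Real.exp ∘ y) ≠ 0) (hu : Tendsto u atTop (nhds y)) :
    (fun k => p (normalizeBy p (Real.exp ∘ u k) - normalizeBy p (Real.exp ∘ y)))
      =O[atTop] fun k => u k - y := by
  have hexp : DifferentiableAt ℝ (fun v : ι → ℝ => Real.exp ∘ v) y :=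
    differentiableAt_pi.2 fun i => (differentiableAt_apply i y).exp
  exact ((isBigO_map_normalizeBy_sub hp).comp_tendsto (hexp.continuousAt.tendsto.comp hu)).trans
    (hexp.isBigO_sub.comp_tendsto hu)

lemma normalizeBy_deformedHots_orbit_eq (hrow : ∀ i, 0 < A i) (hcol : ∀ j, 0 < Aᵀ j)
    (hαβ : α + β = 1) {p : Seminorm ℝ (Fin n → ℝ)} (hp : ∀ x, (∀ i, 0 < x i) → p x ≠ 0)
    {d : ℕ → Fin n → ℝ} (hd0 : ∀ i, 0 < d 0 i)
    (hiter : ∀ k, d (k + 1) = normalizeBy p (deformedHots A α β (d k))) (k : ℕ) (c : ℝ) :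
    d (k + 1) = normalizeBy p
      (Real.exp ∘ fun i => (logHots A α β)^[k + 1] (Real.log ∘ d 0) i + c) := by
  rw [normalizeBy_orbit_eq (s := {x : Fin n → ℝ | ∀ i, 0 < x i})
    (fun x hx => deformedHots_pos hrow hcol α β hx)
    (fun x hx c => deformedHots_smul (fun i => (hrow i).le) hαβ hx) hp hd0 hiter k,
    exp_comp_add_const, normalizeBy_smul_of_pos (Real.exp_pos c),
    ((semiconj_exp_logHots_deformedHots hrow hcol α β).iterate_right (k + 1)).eq,
    exp_comp_log_comp hd0]

theorem exists_isBigO_normalizeBy_deformedHots (hA : A.IsIrreducible)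
    (hprim : (α • A + β • Aᵀ).IsPrimitive) (hα : 0 ≤ α) (hβ : 0 ≤ β) (hαβ : α + β = 1)
    {p : Seminorm ℝ (Fin n → ℝ)} (hp : ∀ x, (∀ i, 0 < x i) → p x ≠ 0) {d : ℕ → Fin n → ℝ}
    (hd0 : ∀ i, 0 < d 0 i) (hiter : ∀ k, d (k + 1) = normalizeBy p (deformedHots A α β (d k))) :
    ∃ x : Fin n → ℝ, (∀ i, 0 < x i) ∧
      deformedHots A α β x = p (deformedHots A α β x) • x ∧ Tendsto d atTop (nhds x) ∧
      ∃ r ∈ Set.Ioo (0 : ℝ) 1, (fun k => p (d k - x)) =O[atTop] fun k => r ^ k := by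
  have hrow := row_pos_of_isIrreducible hA
  have hcol := col_pos_of_isIrreducible hA
  have : Nonempty (Fin n) := not_isEmpty_iff.1 fun hn =>
    hp 0 (fun i => hn.elim i) (map_zero p)
  have hpexp : ∀ u : Fin n → ℝ, p (Real.exp ∘ u) ≠ 0 := fun u => hp _ fun i => Real.exp_pos (u i)
  obtain ⟨l, y, hy, r, hr, hbigO⟩ := exists_eigenvector_isBigO_iterate_logHots_sub hA hprim hα hβ
    hαβ (Real.log ∘ d 0)
  set u : ℕ → Fin n → ℝ := fun k i => (logHots A α β)^[k] (Real.log ∘ d 0) i + -(k * l)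
  have hu : Tendsto u atTop (nhds y) := tendsto_sub_nhds_zero_iff.1
    (hbigO.trans_tendsto (tendsto_pow_atTop_nhds_zero_of_lt_one hr.1.le hr.2))
  have hd : ∀ᶠ k in atTop, normalizeBy p (Real.exp ∘ u k) = d k := by
    filter_upwards [eventually_ne_atTop 0] with k hk
    obtain ⟨k, rfl⟩ := Nat.exists_eq_succ_of_ne_zero hk
    exact (normalizeBy_deformedHots_orbit_eq hrow hcol hαβ hp hd0 hiter k _).symm
  have heig : deformedHots A α β (Real.exp ∘ y) = Real.exp l • (Real.exp ∘ y) :=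
    calc deformedHots A α β (Real.exp ∘ y) = Real.exp ∘ logHots A α β y :=
          (semiconj_exp_logHots_deformedHots hrow hcol α β y).symm
      _ = Real.exp l • (Real.exp ∘ y) := by rw [hy, exp_comp_add_const]
  have hscale : 0 < (p (Real.exp ∘ y))⁻¹ := inv_pos.2 ((apply_nonneg p _).lt_of_ne' (hpexp y))
  refine ⟨normalizeBy p (Real.exp ∘ y), fun i => mul_pos hscale (Real.exp_pos _),
    map_normalizeBy_eq_smul (hpexp y) (Real.exp_pos l).le heig
      (deformedHots_smul hA.nonneg hαβ (fun i => Real.exp_pos _) hscale), ?_, r, hr, ?_⟩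
  · exact ((continuousAt_normalizeBy (hpexp y)).tendsto.comp
      ((continuous_pi fun i => (continuous_apply i).rexp).tendsto y |>.comp hu)).congr' hd
  · exact ((isBigO_map_normalizeBy_exp_sub (hpexp y) hu).trans hbigO).congr'
      (hd.mono fun k hk => congrArg (fun z => p (z - normalizeBy p (Real.exp ∘ y))) hk)
      EventuallyEq.rfl

end DeformedHots

/-- Convergence of the deformed HOTS algorithm: if `A` is irreducible and `αA + βAᵀ`
is primitive, the normalized iteration converges linearly to a positive vector. -/
theorem deformedHots_converges {n : ℕ} (A : Matrix (Fin n) (Fin n) ℝ)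
    (hA : ∀ i j, 0 ≤ A i j)
    (hrow : ∀ i, ∃ j, 0 < A i j) (hcol : ∀ j, ∃ i, 0 < A i j)
    (α β : ℝ) (hα : 0 ≤ α) (hβ : 0 ≤ β) (hαβ : α + β = 1)
    (hirr : ∀ i j, ∃ k : ℕ, 1 ≤ k ∧ 0 < (A ^ k) i j)
    (hprim : ∃ k : ℕ, 1 ≤ k ∧ ∀ i j, 0 < ((α • A + β • Aᵀ) ^ k) i j)
    -- an arbitrary norm `N` on `ℝⁿ`
    (N : (Fin n → ℝ) → ℝ)
    (hN0 : ∀ x, N x = 0 ↔ x = 0)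
    (hNsmul : ∀ (a : ℝ) (x : Fin n → ℝ), N (a • x) = |a| * N x)
    (hNadd : ∀ x y, N (x + y) ≤ N x + N y)
    -- the normalized iteration started at a positive vector `d⁰`
    (d : ℕ → (Fin n → ℝ)) (hd0 : ∀ i, 0 < d 0 i)
    (hiter : ∀ k, d (k + 1) = (N (deformedHots A α β (d k)))⁻¹ • deformedHots A α β (d k)) :
    ∃ dstar : Fin n → ℝ, (∀ i, 0 < dstar i) ∧
      deformedHots A α β dstar = N (deformedHots A α β dstar) • dstar ∧
      Tendsto d atTop (nhds dstar) ∧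
      limsup (fun k : ℕ => N (d k - dstar) ^ (1 / (k : ℝ))) atTop < 1 := by
  set p : Seminorm ℝ (Fin n → ℝ) := Seminorm.of N hNadd hNsmul
  rcases isEmpty_or_nonempty (Fin n) with _ | ⟨⟨i₀⟩⟩
  · have hN : (fun k => N (d k - d 0)) = 0 := funext fun k => (hN0 _).2 (Subsingleton.elim _ _)
    refine ⟨d 0, hd0, Subsingleton.elim _ _,
      tendsto_const_nhds.congr fun k => Subsingleton.elim _ _,
      limsup_rpow_inv_lt_one_of_isBigO (r := 1 / 2) (fun k => (congrFun hN k).ge)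
        (by norm_num) (hN ▸ isBigO_zero _ _)⟩
  · have hp : ∀ x : Fin n → ℝ, (∀ i, 0 < x i) → p x ≠ 0 := fun x hx hpx =>
      (hx i₀).ne' (congrFun ((hN0 x).1 hpx) i₀)
    obtain ⟨x, hx, hfix, hlim, r, hr, hrate⟩ := exists_isBigO_normalizeBy_deformedHots
      ((isIrreducible_iff_exists_pow_pos hA).2 hirr)
      ⟨fun i j => add_nonneg (mul_nonneg hα (hA i j)) (mul_nonneg hβ (hA j i)), hprim⟩
      hα hβ hαβ hp hd0 hiter
    exact ⟨x, hx, hfix, hlim, limsup_rpow_inv_lt_one_of_isBigO (fun k => apply_nonneg p _) hr hrate⟩
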